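/- Let K be a field and n ≥ 1. Let v ∈ K^{2n} be the last standard basis vector and let P' = {α ∈ Sp_{2n}(K) : α·v ∈ K·v and α·v ≠ 0} be the stabilizer of the line K·v. Then for every g ∈ Sp_{2n}(K) there exist a ∈ GL_n(K), a symmetric matrix s ∈ M_n(K), and γ ∈ P' such that g = diag[a, ᵀa^{−1}] · m(s) · γ or g = diag[a, ᵀa^{−1}] · m(s) · η_n · γ, where m(s) = (I_n s; 0 I_n) and η_n = (0 −I_n; I_n 0). -/

import Mathlib

open Matrix

/-- The matrix `η_n = (0 −I_n; I_n 0)`. -/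
def symJ (n : ℕ) (K : Type*) [CommRing K] :
    Matrix (Fin n ⊕ Fin n) (Fin n ⊕ Fin n) K :=
  Matrix.fromBlocks 0 (-1) 1 0

/-- The symplectic group `Sp_{2n}(K) = {α : ᵀα η_n α = η_n}`. -/
def Sp (n : ℕ) (K : Type*) [CommRing K] :
    Set (Matrix (Fin n ⊕ Fin n) (Fin n ⊕ Fin n) K) :=
  {α | αᵀ * symJ n K * α = symJ n K}

/-- The last standard basis vector of `K^{2n}`. -/
def lastBasisVec (n : ℕ) (K : Type*) [CommRing K] (hn : 1 ≤ n) : Fin n ⊕ Fin n → K :=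
  Pi.single (Sum.inr ⟨n - 1, by omega⟩) 1

/-!
`diag[a, ᵀa⁻¹] m(s)` sends `(0, u)` to `(a s u, ᵀa⁻¹ u)`. When `u ≠ 0`, the group `GL_n` moves `u`
to any nonzero vector and symmetric matrices move it to any vector, so these images are all the
`(x, y)` with `y ≠ 0`; inserting `η_n` reaches the `(x, 0)` with `x ≠ 0`. Choosing such an `h` with
`h (0, u) = g (0, u)`, the factor `γ = h⁻¹ g` fixes `(0, u)`.
-/

theorem exists_linearEquiv_apply_eq {K V : Type*} [DivisionRing K] [AddCommGroup V] [Module K V]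
    {x y : V} (hx : x ≠ 0) (hy : y ≠ 0) : ∃ f : V ≃ₗ[K] V, f x = y := by
  obtain ⟨f, hf⟩ := Submodule.exists_linearEquiv_restrict_eq
    (LinearEquiv.coord K V x hx ≪≫ₗ LinearEquiv.toSpanNonzeroSingleton K V y hy)
  refine ⟨f, (hf ⟨x, Submodule.mem_span_singleton_self x⟩).symm.trans ?_⟩
  rw [LinearEquiv.trans_apply, LinearEquiv.coord_self, LinearEquiv.toSpanNonzeroSingleton_one]

section Matrix

variable {l K : Type*} [Fintype l] [Field K]

theorem exists_isUnit_mulVec_eq [DecidableEq l] {u y : l → K} (hu : u ≠ 0) (hy : y ≠ 0) :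
    ∃ a : Matrix l l K, IsUnit a ∧ a *ᵥ u = y := by
  obtain ⟨f, hf⟩ := exists_linearEquiv_apply_eq (K := K) hu hy
  have mulVec_eq (x : l → K) : LinearMap.toMatrix' f.toLinearMap *ᵥ x = f x :=
    LinearMap.toMatrix'_mulVec _ x
  refine ⟨LinearMap.toMatrix' f.toLinearMap, mulVec_injective_iff_isUnit.mp fun x y hxy => ?_, ?_⟩
  · exact f.injective (by simpa only [mulVec_eq] using hxy)
  · rw [mulVec_eq, hf]

theorem exists_isSymm_mulVec_eq {u : l → K} (hu : u ≠ 0) (w : l → K) :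
    ∃ s : Matrix l l K, s.IsSymm ∧ s *ᵥ u = w := by
  classical
  obtain ⟨i, hi⟩ := Function.ne_iff.mp hu
  let φ : l → K := Pi.single i (u i)⁻¹
  have hφ : φ ⬝ᵥ u = 1 := by
    rw [single_dotProduct, inv_mul_cancel₀ hi]
  refine ⟨vecMulVec w φ + vecMulVec φ w - (w ⬝ᵥ u) • vecMulVec φ φ, ?_, ?_⟩
  · simp only [IsSymm, transpose_sub, transpose_add, transpose_smul, transpose_vecMulVec,
      add_comm (vecMulVec φ w)]
  · simp only [sub_mulVec, add_mulVec, smul_mulVec, vecMulVec_mulVec, hφ, op_smul_eq_smul,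
      one_smul, add_sub_cancel_right]

end Matrix

section SiegelParabolic

variable {l R : Type*} [DecidableEq l] [CommRing R]

/-- The matrix `m(s)`, which for `s` symmetric is an element of the unipotent radical of the Siegel
parabolic. -/
def siegelUnipotent (s : Matrix l l R) : Matrix (l ⊕ l) (l ⊕ l) R :=
  fromBlocks 1 s 0 1

variable [Fintype l]

/-- The element `diag[a, ᵀa⁻¹]` of the Levi subgroup of the Siegel parabolic, for `a ∈ GL_l(R)`.
For `a` not invertible, `aᵀ⁻¹` is `0`. -/
noncomputable def siegelLevi (a : Matrix l l R) : Matrix (l ⊕ l) (l ⊕ l) R :=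
  fromBlocks a 0 0 aᵀ⁻¹

theorem siegelLevi_mem_symplecticGroup {a : Matrix l l R} (ha : IsUnit a) :
    siegelLevi a ∈ symplecticGroup l R := by
  have ha' : IsUnit a.det := (isUnit_iff_isUnit_det a).mp ha
  simp [SymplecticGroup.mem_iff, siegelLevi, J, fromBlocks_transpose, fromBlocks_multiply,
    transpose_nonsing_inv, mul_nonsing_inv a ha', nonsing_inv_mul aᵀ (isUnit_det_transpose a ha')]

theorem siegelUnipotent_mem_symplecticGroup {s : Matrix l l R} (hs : s.IsSymm) :
    siegelUnipotent s ∈ symplecticGroup l R := by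
  simp [SymplecticGroup.mem_iff, siegelUnipotent, J, fromBlocks_transpose, fromBlocks_multiply,
    hs.eq]

theorem siegelLevi_mulVec (a : Matrix l l R) (x y : l → R) :
    siegelLevi a *ᵥ Sum.elim x y = Sum.elim (a *ᵥ x) (aᵀ⁻¹ *ᵥ y) := by
  simp [siegelLevi, fromBlocks_mulVec]

theorem siegelUnipotent_mulVec (s : Matrix l l R) (x y : l → R) :
    siegelUnipotent s *ᵥ Sum.elim x y = Sum.elim (x + s *ᵥ y) y := by
  simp [siegelUnipotent, fromBlocks_mulVec]

theorem J_mulVec (x y : l → R) : J l R *ᵥ Sum.elim x y = Sum.elim (-y) x := by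
  simp [J, fromBlocks_mulVec, neg_mulVec]

theorem exists_mul_eq_of_mulVec_eq {g h : Matrix (l ⊕ l) (l ⊕ l) R}
    (hg : g ∈ symplecticGroup l R) (hh : h ∈ symplecticGroup l R) {v : l ⊕ l → R}
    (hv : h *ᵥ v = g *ᵥ v) : ∃ γ ∈ symplecticGroup l R, γ *ᵥ v = v ∧ g = h * γ := by
  have hdet : IsUnit h.det := SymplecticGroup.symplectic_det hh
  have hinv : h⁻¹ ∈ symplecticGroup l R :=
    SymplecticGroup.coe_inv' ⟨h, hh⟩ ▸ SetLike.coe_mem _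
  refine ⟨h⁻¹ * g, mul_mem hinv hg, ?_, (mul_nonsing_inv_cancel_left h g hdet).symm⟩
  rw [← mulVec_mulVec, ← hv, mulVec_mulVec, nonsing_inv_mul h hdet, one_mulVec]

end SiegelParabolic

section Orbits

variable {l K : Type*} [DecidableEq l] [Fintype l] [Field K] {u : l → K}

theorem exists_siegelLevi_mul_siegelUnipotent_mulVec_eq (hu : u ≠ 0) (x : l → K) {y : l → K}
    (hy : y ≠ 0) : ∃ a : Matrix l l K, IsUnit a ∧ ∃ s : Matrix l l K, s.IsSymm ∧
      (siegelLevi a * siegelUnipotent s) *ᵥ Sum.elim 0 u = Sum.elim x y := by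
  obtain ⟨b, hb, hbu⟩ := exists_isUnit_mulVec_eq hu hy
  obtain ⟨s, hs, hsu⟩ := exists_isSymm_mulVec_eq hu (bᵀ *ᵥ x)
  have hdet : IsUnit b.det := (isUnit_iff_isUnit_det b).mp hb
  refine ⟨bᵀ⁻¹, isUnit_nonsing_inv_iff.mpr ((isUnit_transpose b).mpr hb), s, hs, ?_⟩
  rw [← mulVec_mulVec, siegelUnipotent_mulVec, siegelLevi_mulVec, zero_add, hsu, mulVec_mulVec,
    nonsing_inv_mul _ (isUnit_det_transpose b hdet), one_mulVec, transpose_nonsing_inv,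
    transpose_transpose, nonsing_inv_nonsing_inv b hdet, hbu]

theorem exists_siegelLevi_mul_J_mulVec_eq (hu : u ≠ 0) {x : l → K} (hx : x ≠ 0) :
    ∃ a : Matrix l l K, IsUnit a ∧
      (siegelLevi a * J l K) *ᵥ Sum.elim 0 u = Sum.elim x 0 := by
  obtain ⟨a, ha, hau⟩ := exists_isUnit_mulVec_eq (neg_ne_zero.mpr hu) hx
  exact ⟨a, ha, by rw [← mulVec_mulVec, J_mulVec, siegelLevi_mulVec, hau, mulVec_zero]⟩

theorem exists_siegel_mulVec_eq (hu : u ≠ 0) {w : l ⊕ l → K} (hw : w ≠ 0) :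
    ∃ a : Matrix l l K, IsUnit a ∧ ∃ s : Matrix l l K, s.IsSymm ∧
      ((siegelLevi a * siegelUnipotent s) *ᵥ Sum.elim 0 u = w ∨
       (siegelLevi a * siegelUnipotent s * J l K) *ᵥ Sum.elim 0 u = w) := by
  obtain ⟨x, y, rfl⟩ : ∃ x y, w = Sum.elim x y := ⟨_, _, (Sum.elim_comp_inl_inr w).symm⟩
  obtain rfl | hy := eq_or_ne y 0
  · have hx : x ≠ 0 := by
      rintro rfl
      exact hw Sum.elim_zero_zero
    obtain ⟨a, ha, hau⟩ := exists_siegelLevi_mul_J_mulVec_eq hu hx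
    have siegelUnipotent_zero : siegelUnipotent (0 : Matrix l l K) = 1 := fromBlocks_one
    exact ⟨a, ha, 0, isSymm_zero, .inr (by rwa [siegelUnipotent_zero, mul_one])⟩
  · obtain ⟨a, ha, s, hs, h⟩ := exists_siegelLevi_mul_siegelUnipotent_mulVec_eq hu x hy
    exact ⟨a, ha, s, hs, .inl h⟩

theorem sp_cusp_representatives_general (hu : u ≠ 0) {g : Matrix (l ⊕ l) (l ⊕ l) K}
    (hg : g ∈ symplecticGroup l K) :
    ∃ a : Matrix l l K, IsUnit a ∧ ∃ s : Matrix l l K, s.IsSymm ∧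
      ∃ γ ∈ symplecticGroup l K, γ *ᵥ Sum.elim 0 u = Sum.elim (0 : l → K) u ∧
        (g = siegelLevi a * siegelUnipotent s * γ ∨
         g = siegelLevi a * siegelUnipotent s * J l K * γ) := by
  have hu' : Sum.elim (0 : l → K) u ≠ 0 := fun h =>
    hu (Sum.elim_eq_iff.mp (h.trans Sum.elim_zero_zero.symm)).2
  have hinj : Function.Injective g.mulVec := mulVec_injective_iff_isUnit.mpr
    ((isUnit_iff_isUnit_det g).mpr (SymplecticGroup.symplectic_det hg))
  have hgu : g *ᵥ Sum.elim 0 u ≠ 0 := (hinj.ne_iff' (mulVec_zero g)).mpr hu'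
  obtain ⟨a, ha, s, hs, h⟩ := exists_siegel_mulVec_eq hu hgu
  have hmem := mul_mem (siegelLevi_mem_symplecticGroup ha) (siegelUnipotent_mem_symplecticGroup hs)
  obtain h | h := h
  · obtain ⟨γ, hγ, hγu, hgγ⟩ := exists_mul_eq_of_mulVec_eq hg hmem h
    exact ⟨a, ha, s, hs, γ, hγ, hγu, .inl hgγ⟩
  · obtain ⟨γ, hγ, hγu, hgγ⟩ :=
      exists_mul_eq_of_mulVec_eq hg (mul_mem hmem (SymplecticGroup.J_mem l K)) h
    exact ⟨a, ha, s, hs, γ, hγ, hγu, .inr hgγ⟩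

end Orbits

theorem mem_Sp_iff {n : ℕ} {R : Type*} [CommRing R] {g : Matrix (Fin n ⊕ Fin n) (Fin n ⊕ Fin n) R} :
    g ∈ Sp n R ↔ g ∈ symplecticGroup (Fin n) R :=
  SymplecticGroup.mem_iff'.symm

theorem lastBasisVec_eq_elim {n : ℕ} {R : Type*} [CommRing R] (hn : 1 ≤ n) :
    lastBasisVec n R hn =
      Sum.elim (0 : Fin n → R) (Pi.single ⟨n - 1, by omega⟩ 1) := by
  ext (i | i) <;> simp [lastBasisVec, Pi.single_apply]

/-- Every `g ∈ Sp_{2n}(K)` can be written as `diag[a, ᵀa⁻¹] m(s) γ` or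
`diag[a, ᵀa⁻¹] m(s) η_n γ` with `a ∈ GL_n(K)`, `s` symmetric, and `γ` in the Klingen
parabolic of corank one (the stabilizer of the line spanned by the last basis vector). -/
theorem sp_cusp_representatives (K : Type*) [Field K] (n : ℕ) (hn : 1 ≤ n)
    (g : Matrix (Fin n ⊕ Fin n) (Fin n ⊕ Fin n) K) (hg : g ∈ Sp n K) :
    ∃ a : Matrix (Fin n) (Fin n) K, IsUnit a ∧
      ∃ s : Matrix (Fin n) (Fin n) K, sᵀ = s ∧
        ∃ γ ∈ Sp n K,
          (∃ k : K, γ.mulVec (lastBasisVec n K hn) = k • lastBasisVec n K hn) ∧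
          γ.mulVec (lastBasisVec n K hn) ≠ 0 ∧
          (g = Matrix.fromBlocks a 0 0 ((aᵀ)⁻¹) * Matrix.fromBlocks 1 s 0 1 * γ ∨
           g = Matrix.fromBlocks a 0 0 ((aᵀ)⁻¹) * Matrix.fromBlocks 1 s 0 1 *
                 symJ n K * γ) := by
  obtain ⟨a, ha, s, hs, γ, hγ, hγv, h⟩ := sp_cusp_representatives_general
    (u := Pi.single ⟨n - 1, by omega⟩ 1) (Pi.single_ne_zero_iff.mpr one_ne_zero) (mem_Sp_iff.mp hg)
  simp only [← lastBasisVec_eq_elim hn] at hγv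
  refine ⟨a, ha, s, hs, γ, mem_Sp_iff.mpr hγ, ⟨1, by rw [hγv, one_smul]⟩, ?_, h⟩
  exact hγv.trans_ne (Pi.single_ne_zero_iff.mpr one_ne_zero)
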